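/- The function F ↦ ( max(√(‖F‖² + 2·det F) − 1, 0) )² is convex on ℝ^{2×2}. -/

import Mathlib

open Matrix

/-- Squared Frobenius norm of a real matrix. -/
noncomputable def frobSq {n : ℕ} (A : Matrix (Fin n) (Fin n) ℝ) : ℝ :=
  ∑ i, ∑ j, (A i j) ^ 2

/-!
As a real-linear map of `ℂ`, a real `2 × 2` matrix `F` is `z ↦ α z + β conj(z)`, and then
`‖F‖² = 2 (|α|² + |β|²)` and `det F = |α|² - |β|²`. Hence `√(‖F‖² + 2 det F) = 2 |α|`, which is
convex because `α` depends linearly on `F`. Taking the positive part and then squaring preserves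
convexity, since squaring is convex and increasing on `[0, ∞)`.
-/

/-- The conformal part of a real `2 × 2` matrix: the coefficient `α : ℂ` for which the matrix,
acting on `ℂ` in the basis `1, i`, is `z ↦ α z + β conj(z)`. -/
noncomputable def conformalPart : Matrix (Fin 2) (Fin 2) ℝ →ₗ[ℝ] ℂ where
  toFun F := ⟨(F 0 0 + F 1 1) / 2, (F 1 0 - F 0 1) / 2⟩
  map_add' F G := by
    apply Complex.ext <;> simp only [Matrix.add_apply, Complex.add_re, Complex.add_im] <;> ring
  map_smul' r F := by
    apply Complex.ext <;>
      simp only [Matrix.smul_apply, smul_eq_mul, RingHom.id_apply, Complex.smul_re,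
        Complex.smul_im] <;>
      ring

lemma frobSq_add_two_mul_det (F : Matrix (Fin 2) (Fin 2) ℝ) :
    frobSq F + 2 * F.det = (2 * ‖conformalPart F‖) ^ 2 := by
  rw [mul_pow, Complex.sq_norm, Complex.normSq_apply]
  simp only [frobSq, Fin.sum_univ_two, det_fin_two, conformalPart, LinearMap.coe_mk, AddHom.coe_mk]
  ring

lemma sqrt_frobSq_add_two_mul_det (F : Matrix (Fin 2) (Fin 2) ℝ) :
    √(frobSq F + 2 * F.det) = 2 * ‖conformalPart F‖ := by
  rw [frobSq_add_two_mul_det, Real.sqrt_sq (by positivity)]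

lemma convexOn_sqrt_frobSq_add_two_mul_det :
    ConvexOn ℝ Set.univ (fun F : Matrix (Fin 2) (Fin 2) ℝ => √(frobSq F + 2 * F.det)) := by
  simp only [sqrt_frobSq_add_two_mul_det]
  exact (convexOn_univ_norm.comp_linearMap conformalPart).smul zero_le_two

lemma convexOn_max_zero_pow {𝕜 E R : Type*} [CommRing 𝕜] [LinearOrder 𝕜] [IsStrictOrderedRing 𝕜]
    [AddCommGroup E] [Module 𝕜 E] [CommRing R] [LinearOrder R] [IsStrictOrderedRing R]
    [Algebra 𝕜 R] [IsStrictOrderedModule 𝕜 R] {s : Set E} {f : E → R} (hf : ConvexOn 𝕜 s f)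
    (n : ℕ) : ConvexOn 𝕜 s (fun x => max (f x) 0 ^ n) :=
  (hf.sup (convexOn_const 0 hf.1)).pow (fun _ _ => le_max_right _ _) n

theorem convexOn_relaxed_part :
    ConvexOn ℝ Set.univ (fun F : Matrix (Fin 2) (Fin 2) ℝ =>
      (max (Real.sqrt (frobSq F + 2 * F.det) - 1) 0) ^ 2) :=
  convexOn_max_zero_pow
    (convexOn_sqrt_frobSq_add_two_mul_det.sub (concaveOn_const 1 convex_univ)) 2
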